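/- Fix 0 ≤ γ ≤ 1 and suppose there is a constant M > 0 such that B̃_n((t−x)²;x) ≤ M·x·(1+x)/n for all n ≥ 2 and x ≥ 0. Then there exist a constant D > 0 and an integer n₀ such that for every bounded continuous f:[0,∞)→ℝ, every integer n ≥ n₀ and every x > 0, |B̃_n(f;x) − f(x)| ≤ D·ω_{χ^γ}( f ; χ(x)^{1−γ}/√n ), where χ(x) = √(x(1+x)) and ω_{χ^γ} is the Ditzian–Totik modulus of smoothness. -/

import Mathlib

open Real MeasureTheory Filter Topology

/-- `p_n(x) = n² x² T(1) + n x U(1) + V(1)`. -/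
noncomputable def pnx (T U V : ℝ → ℝ) (n : ℕ) (x : ℝ) : ℝ :=
  (n : ℝ) ^ 2 * x ^ 2 * T 1 + (n : ℝ) * x * U 1 + V 1

/-- The Euler Beta function value `B(j, n+1) = Γ(j)Γ(n+1)/Γ(j+n+1)`. -/
noncomputable def betaB (j n : ℕ) : ℝ :=
  Real.Gamma (j : ℝ) * Real.Gamma ((n : ℝ) + 1) / Real.Gamma ((j : ℝ) + (n : ℝ) + 1)

/-- The Baskakov–Durrmeyer type operator `B̃_n(f;x)`. -/
noncomputable def BDop (ξ S T U V : ℝ → ℝ) (Θ : ℕ → ℝ → ℝ) (n : ℕ) (f : ℝ → ℝ) (x : ℝ) : ℝ :=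
  (S 1 * ξ (pnx T U V n x))⁻¹ *
    (Θ 0 ((n : ℝ) * x) * f 0 +
      ∑' j : ℕ, (Θ (j + 1) ((n : ℝ) * x) / betaB (j + 1) n) *
        ∫ s in Set.Ioi (0 : ℝ), s ^ j * (1 + s) ^ (-((n : ℝ) + (j : ℝ) + 2)) * f s)

/-- `χ(x) = √(x(1+x))`. -/
noncomputable def chi (x : ℝ) : ℝ := Real.sqrt (x * (1 + x))

/-- The Ditzian–Totik modulus of smoothness `ω_{χ^γ}(f, δ)` on `[0,∞)`. -/
noncomputable def dtMod (f : ℝ → ℝ) (γ δ : ℝ) : ℝ :=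
  sSup {d : ℝ | ∃ h x : ℝ, 0 < h ∧ h ≤ δ ∧ 0 ≤ x - h * chi x ^ γ / 2 ∧
    d = |f (x + h * chi x ^ γ / 2) - f (x - h * chi x ^ γ / 2)|}

/-!
The operator is an average, with weights `Θ j (n x)`, of beta-prime laws `μ n j`, and the weights
do not see `n` and `x` separately but only `y = n x`. Chaining increments that the modulus
`w = ω(f, χ(x)^(1-γ) / √n)` controls gives, for `t ≥ 0`,
`|f t - f x| ≤ (2 + n (t - x)² / (x (1 + x)) + n (t - x)² / (x (1 + t))) w`,
where the last term comes from chaining towards `0` in the variable `√t`. The moment hypothesis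
bounds the average of the first quadratic term. For the second, division by `1 + t` turns `μ n j`
into a multiple of `μ (n + 1) j`, which bounds its average by a multiple of
`∑ Θ j y ((j - y)² + j)`; the latter is controlled by applying the moment hypothesis to the pairs
`(N, y / N)`, which all share the weights `Θ j y`, and letting `N → ∞`.
-/

/-! ### Beta-prime integrals -/

/-- The unnormalised beta-prime density `s ↦ sᵃ (1 + s)^(-(a + b + 2))`, whose integral over
`(0, ∞)` is `B(a + 1, b + 1)`; with `a = j - 1` and `b = n` it is the integration kernel of the
`j`-th term of `BDop`, written with natural exponents. -/
noncomputable def betaPrimeKernel (a b : ℕ) (s : ℝ) : ℝ := s ^ a / (1 + s) ^ (a + b + 2)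

lemma betaPrimeKernel_nonneg (a b : ℕ) {s : ℝ} (hs : 0 ≤ s) : 0 ≤ betaPrimeKernel a b s := by
  unfold betaPrimeKernel; positivity

lemma betaPrimeKernel_mul_self (a b : ℕ) (s : ℝ) :
    betaPrimeKernel a (b + 1) s * s = betaPrimeKernel (a + 1) b s := by
  rw [betaPrimeKernel, betaPrimeKernel, div_mul_eq_mul_div, ← pow_succ,
    show a + (b + 1) + 2 = a + 1 + b + 2 by ring]

lemma betaPrimeKernel_div_one_add (a b : ℕ) (s : ℝ) :
    betaPrimeKernel a b s / (1 + s) = betaPrimeKernel a (b + 1) s := by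
  rw [betaPrimeKernel, betaPrimeKernel, div_div, ← pow_succ,
    show a + (b + 1) + 2 = a + b + 2 + 1 by ring]

lemma betaPrimeKernel_eq_rpow (a b : ℕ) {s : ℝ} (hs : 0 ≤ s) :
    betaPrimeKernel a b s = s ^ a * (1 + s) ^ (-((b : ℝ) + a + 2)) := by
  have hcast : (b : ℝ) + a + 2 = (a + b + 2 : ℕ) := by push_cast; ring
  rw [betaPrimeKernel, hcast, rpow_neg (by positivity), rpow_natCast, div_eq_mul_inv]

lemma measurable_betaPrimeKernel (a b : ℕ) : Measurable (betaPrimeKernel a b) := by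
  unfold betaPrimeKernel; fun_prop

lemma pow_div_one_add_pow_le (a b : ℕ) {s : ℝ} (hs : 0 ≤ s) :
    s ^ a / (1 + s) ^ (a + b) ≤ ((1 + s) ^ b)⁻¹ := by
  rw [pow_add, ← div_div, div_eq_mul_inv _ ((1 + s) ^ b)]
  have hpow : s ^ a ≤ (1 + s) ^ a := by gcongr; linarith
  exact mul_le_of_le_one_left (by positivity) (div_le_one_of_le₀ hpow (by positivity))

lemma integrableOn_betaPrimeKernel (a b : ℕ) :
    IntegrableOn (betaPrimeKernel a b) (Set.Ioi 0) := by
  refine integrable_inv_one_add_sq.integrableOn.mono'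
    (measurable_betaPrimeKernel a b).aestronglyMeasurable ?_
  refine (ae_restrict_mem measurableSet_Ioi).mono fun s (hs : 0 < s) => ?_
  rw [norm_of_nonneg (betaPrimeKernel_nonneg a b hs.le)]
  calc betaPrimeKernel a b s ≤ ((1 + s) ^ (b + 2))⁻¹ := pow_div_one_add_pow_le a (b + 2) hs.le
    _ ≤ ((1 + s) ^ 2)⁻¹ := by gcongr <;> linarith
    _ ≤ (1 + s ^ 2)⁻¹ := by gcongr; nlinarith

lemma hasDerivAt_pow_div_one_add_pow (a b : ℕ) {s : ℝ} (hs : 0 ≤ s) :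
    HasDerivAt (fun s : ℝ => s ^ a / (1 + s) ^ (a + b + 1))
      (a * betaPrimeKernel (a - 1) b s - (a + b + 1) * betaPrimeKernel a b s) s := by
  have hden : HasDerivAt (fun s : ℝ => (1 + s) ^ (a + b + 1))
      ((a + b + 1 : ℕ) * (1 + s) ^ (a + b)) s := by
    simpa using ((hasDerivAt_id' s).const_add 1).fun_pow (a + b + 1)
  refine ((hasDerivAt_pow a s).div hden (by positivity)).congr_deriv ?_
  unfold betaPrimeKernel
  cases a with
  | zero => push_cast; field_simp; ring
  | succ a =>
    rw [Nat.add_sub_cancel]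
    push_cast
    field_simp
    ring

lemma tendsto_pow_div_one_add_pow_atTop (a b : ℕ) :
    Tendsto (fun s : ℝ => s ^ a / (1 + s) ^ (a + b + 1)) atTop (𝓝 0) := by
  have hlim : Tendsto (fun s : ℝ => ((1 + s) ^ (b + 1))⁻¹) atTop (𝓝 0) :=
    tendsto_inv_atTop_zero.comp
      ((tendsto_pow_atTop b.succ_ne_zero).comp (tendsto_atTop_add_const_left _ 1 tendsto_id))
  refine squeeze_zero' ?_ ?_ hlim <;> filter_upwards [eventually_ge_atTop 0] with s hs
  · positivity
  · exact pow_div_one_add_pow_le a (b + 1) hs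

/- The truncated `a - 1` is harmless at `a = 0`, where its coefficient vanishes; there `0 ^ a = 1`
is the boundary term that starts the recurrence. -/
lemma integral_betaPrimeKernel_rec (a b : ℕ) :
    (a + b + 1) * ∫ s in Set.Ioi 0, betaPrimeKernel a b s =
      a * (∫ s in Set.Ioi 0, betaPrimeKernel (a - 1) b s) + 0 ^ a := by
  have hint₁ := (integrableOn_betaPrimeKernel (a - 1) b).const_mul (a : ℝ)
  have hint₂ := (integrableOn_betaPrimeKernel a b).const_mul (a + b + 1 : ℝ)
  have hftc := integral_Ioi_of_hasDerivAt_of_tendsto'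
    (fun s hs => hasDerivAt_pow_div_one_add_pow a b hs) (hint₁.sub hint₂)
    (tendsto_pow_div_one_add_pow_atTop a b)
  rw [integral_sub hint₁ hint₂, integral_const_mul, integral_const_mul] at hftc
  simp only [add_zero, one_pow, div_one] at hftc
  linarith

lemma integral_betaPrimeKernel (a b : ℕ) :
    ∫ s in Set.Ioi 0, betaPrimeKernel a b s =
      (a.factorial : ℝ) * b.factorial / (a + b + 1).factorial := by
  have hrec := integral_betaPrimeKernel_rec a b
  induction a with
  | zero =>
    rw [Nat.zero_add, Nat.factorial_succ]
    simp only [CharP.cast_eq_zero, zero_add, zero_mul, pow_zero] at hrec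
    push_cast
    field_simp
    simpa [mul_comm] using hrec
  | succ a ih =>
    rw [Nat.add_sub_cancel, ih (integral_betaPrimeKernel_rec a b), zero_pow a.succ_ne_zero,
      add_zero] at hrec
    rw [Nat.add_right_comm a 1 b, Nat.factorial_succ (a + b + 1), Nat.factorial_succ a]
    push_cast at hrec ⊢
    field_simp at hrec ⊢
    linarith

lemma betaB_succ_eq_factorial (j n : ℕ) :
    betaB (j + 1) n = (j.factorial : ℝ) * n.factorial / (j + n + 1).factorial := by
  rw [betaB, Gamma_nat_eq_factorial, Nat.cast_succ, Gamma_nat_eq_factorial,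
    ← Gamma_nat_eq_factorial (j + n + 1)]
  congr 2; push_cast; ring

lemma betaB_succ_pos (j n : ℕ) : 0 < betaB (j + 1) n := by
  rw [betaB_succ_eq_factorial]; positivity

lemma integral_betaPrimeKernel_eq_betaB (j n : ℕ) :
    ∫ s in Set.Ioi 0, betaPrimeKernel j n s = betaB (j + 1) n := by
  rw [integral_betaPrimeKernel, betaB_succ_eq_factorial]

lemma betaB_succ_succ_left (j n : ℕ) :
    betaB (j + 2) n = (j + 1) / (n + 1) * betaB (j + 1) (n + 1) := by
  rw [betaB_succ_eq_factorial, betaB_succ_eq_factorial, Nat.factorial_succ j,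
    Nat.factorial_succ n, show j + 1 + n + 1 = j + (n + 1) + 1 by ring]
  push_cast
  field_simp

lemma betaB_succ_succ_right (j n : ℕ) :
    betaB (j + 1) (n + 1) = (n + 1) / (n + j + 2) * betaB (j + 1) n := by
  rw [betaB_succ_eq_factorial, betaB_succ_eq_factorial, ← Nat.add_assoc,
    Nat.factorial_succ (j + n + 1), Nat.factorial_succ n]
  push_cast
  field_simp
  ring

/-! ### Beta-prime laws -/

/-- The law against which the `j`-th term of `BDop` averages `f`: the beta-prime distribution with
parameters `j` and `n + 1`, degenerating to the point mass at `0` for `j = 0`. -/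
noncomputable def betaPrimeMeasure (n : ℕ) : ℕ → Measure ℝ
  | 0 => Measure.dirac 0
  | j + 1 => (volume.restrict (Set.Ioi 0)).withDensity fun s =>
      ENNReal.ofReal (betaPrimeKernel j n s / betaB (j + 1) n)

lemma integrable_betaPrimeMeasure_zero (n : ℕ) (g : ℝ → ℝ) :
    Integrable g (betaPrimeMeasure n 0) :=
  integrable_dirac enorm_lt_top

lemma integral_betaPrimeMeasure_zero (n : ℕ) (g : ℝ → ℝ) :
    ∫ t, g t ∂betaPrimeMeasure n 0 = g 0 :=
  integral_dirac g 0

lemma measurable_betaPrimeDensity (n j : ℕ) :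
    Measurable fun s => ENNReal.ofReal (betaPrimeKernel j n s / betaB (j + 1) n) :=
  ((measurable_betaPrimeKernel j n).div_const _).ennreal_ofReal

lemma toReal_betaPrimeDensity_smul (n j : ℕ) (g : ℝ → ℝ) {s : ℝ} (hs : 0 < s) :
    (ENNReal.ofReal (betaPrimeKernel j n s / betaB (j + 1) n)).toReal • g s =
      betaPrimeKernel j n s * g s / betaB (j + 1) n := by
  rw [ENNReal.toReal_ofReal (div_nonneg (betaPrimeKernel_nonneg j n hs.le)
    (betaB_succ_pos j n).le), smul_eq_mul, div_mul_eq_mul_div]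

lemma integral_betaPrimeMeasure_succ (n j : ℕ) (g : ℝ → ℝ) :
    ∫ t, g t ∂betaPrimeMeasure n (j + 1) =
      (∫ s in Set.Ioi 0, betaPrimeKernel j n s * g s) / betaB (j + 1) n := by
  rw [betaPrimeMeasure, integral_withDensity_eq_integral_toReal_smul
    (measurable_betaPrimeDensity n j) (.of_forall fun _ => ENNReal.ofReal_lt_top),
    ← integral_div]
  exact setIntegral_congr_fun measurableSet_Ioi fun s hs => toReal_betaPrimeDensity_smul n j g hs

lemma integrable_betaPrimeMeasure_succ_iff {n j : ℕ} {g : ℝ → ℝ} :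
    Integrable g (betaPrimeMeasure n (j + 1)) ↔
      IntegrableOn (fun s => betaPrimeKernel j n s * g s) (Set.Ioi 0) := by
  rw [betaPrimeMeasure, integrable_withDensity_iff_integrable_smul'
    (measurable_betaPrimeDensity n j) (.of_forall fun _ => ENNReal.ofReal_lt_top),
    ← IntegrableOn,
    integrableOn_congr_fun (s := Set.Ioi 0)
      (fun s hs => toReal_betaPrimeDensity_smul n j g hs) measurableSet_Ioi]
  exact integrable_mul_const_iff (inv_pos.2 (betaB_succ_pos j n)).ne'.isUnit _

instance isProbabilityMeasure_betaPrimeMeasure (n j : ℕ) :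
    IsProbabilityMeasure (betaPrimeMeasure n j) := by
  cases j with
  | zero => exact Measure.dirac.isProbabilityMeasure
  | succ j =>
    have hone : ∫ _, (1 : ℝ) ∂betaPrimeMeasure n (j + 1) = 1 := by
      simp only [integral_betaPrimeMeasure_succ, mul_one, integral_betaPrimeKernel_eq_betaB,
        div_self (betaB_succ_pos j n).ne']
    rw [integral_const, smul_eq_mul, mul_one, measureReal_def] at hone
    exact ⟨(ENNReal.toReal_eq_one_iff _).1 hone⟩

lemma ae_nonneg_betaPrimeMeasure (n j : ℕ) : ∀ᵐ t ∂betaPrimeMeasure n j, 0 ≤ t := by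
  cases j with
  | zero => simp [betaPrimeMeasure, ae_dirac_eq]
  | succ j =>
    exact (withDensity_absolutelyContinuous _ _).ae_le
      ((ae_restrict_mem measurableSet_Ioi).mono fun _ ht => ht.le)

lemma aestronglyMeasurable_betaPrimeMeasure {f : ℝ → ℝ}
    (hf : ContinuousOn f (Set.Ici 0)) (n j : ℕ) :
    AEStronglyMeasurable f (betaPrimeMeasure n j) := by
  cases j with
  | zero => exact aestronglyMeasurable_dirac
  | succ j =>
    exact ((hf.mono Set.Ioi_subset_Ici_self).aestronglyMeasurable measurableSet_Ioi).mono_ac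
      (withDensity_absolutelyContinuous _ _)

lemma integrable_betaPrimeMeasure_of_bounded {f : ℝ → ℝ} (hf : ContinuousOn f (Set.Ici 0))
    {B : ℝ} (hB : ∀ t, 0 ≤ t → |f t| ≤ B) (n j : ℕ) : Integrable f (betaPrimeMeasure n j) :=
  .of_bound (aestronglyMeasurable_betaPrimeMeasure hf n j) B
    ((ae_nonneg_betaPrimeMeasure n j).mono hB)

/- Multiplying by `t` and dividing by `1 + t` both shift the parameters of the beta-prime law,
which gives every moment recursively. -/
lemma integrable_id_mul_betaPrimeMeasure {n j : ℕ} {g : ℝ → ℝ}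
    (hg : Integrable g (betaPrimeMeasure n (j + 1))) :
    Integrable (fun t => t * g t) (betaPrimeMeasure (n + 1) j) := by
  cases j with
  | zero => exact integrable_betaPrimeMeasure_zero _ _
  | succ j =>
    rw [integrable_betaPrimeMeasure_succ_iff] at hg ⊢
    simpa only [← mul_assoc, betaPrimeKernel_mul_self] using hg

lemma integral_id_mul_betaPrimeMeasure (n j : ℕ) (g : ℝ → ℝ) :
    ∫ t, t * g t ∂betaPrimeMeasure (n + 1) j =
      j / (n + 1) * ∫ t, g t ∂betaPrimeMeasure n (j + 1) := by
  cases j with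
  | zero => simp [integral_betaPrimeMeasure_zero]
  | succ j =>
    simp only [integral_betaPrimeMeasure_succ, ← mul_assoc, betaPrimeKernel_mul_self]
    have hpos := betaB_succ_pos j (n + 1)
    rw [betaB_succ_succ_left]
    push_cast
    field_simp

lemma betaPrimeKernel_mul_div_one_add (j n : ℕ) (g : ℝ → ℝ) (t : ℝ) :
    betaPrimeKernel j n t * (g t / (1 + t)) = betaPrimeKernel j (n + 1) t * g t := by
  rw [← betaPrimeKernel_div_one_add]; ring

lemma integrable_div_one_add_betaPrimeMeasure {n j : ℕ} {g : ℝ → ℝ}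
    (hg : Integrable g (betaPrimeMeasure (n + 1) j)) :
    Integrable (fun t => g t / (1 + t)) (betaPrimeMeasure n j) := by
  cases j with
  | zero => exact integrable_betaPrimeMeasure_zero _ _
  | succ j =>
    rw [integrable_betaPrimeMeasure_succ_iff] at hg ⊢
    simpa only [betaPrimeKernel_mul_div_one_add] using hg

lemma integral_div_one_add_betaPrimeMeasure (n j : ℕ) (g : ℝ → ℝ) :
    ∫ t, g t / (1 + t) ∂betaPrimeMeasure n j =
      (n + 1) / (n + 1 + j) * ∫ t, g t ∂betaPrimeMeasure (n + 1) j := by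
  cases j with
  | zero =>
    have hn : (n : ℝ) + 1 ≠ 0 := by positivity
    simp [integral_betaPrimeMeasure_zero, hn]
  | succ j =>
    simp only [integral_betaPrimeMeasure_succ, betaPrimeKernel_mul_div_one_add]
    have hpos := betaB_succ_pos j n
    rw [betaB_succ_succ_right]
    push_cast
    field_simp
    ring

lemma integrable_id_betaPrimeMeasure (n j : ℕ) :
    Integrable (fun t => t) (betaPrimeMeasure (n + 1) j) := by
  simpa only [mul_one] using
    integrable_id_mul_betaPrimeMeasure (integrable_const (1 : ℝ) (μ := betaPrimeMeasure n (j + 1)))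

lemma integral_id_betaPrimeMeasure (n j : ℕ) :
    ∫ t, t ∂betaPrimeMeasure (n + 1) j = j / (n + 1) := by
  simpa using integral_id_mul_betaPrimeMeasure n j fun _ => 1

lemma sub_sq_eq_mul_add (t x : ℝ) : (t - x) ^ 2 = t * (t - 2 * x) + x ^ 2 := by ring

lemma integrable_sub_sq_betaPrimeMeasure {n : ℕ} (hn : 2 ≤ n) (j : ℕ) (x : ℝ) :
    Integrable (fun t => (t - x) ^ 2) (betaPrimeMeasure n j) := by
  obtain ⟨n, rfl⟩ := Nat.exists_eq_add_of_le' hn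
  simp only [sub_sq_eq_mul_add]
  exact (integrable_id_mul_betaPrimeMeasure
    ((integrable_id_betaPrimeMeasure n (j + 1)).sub (integrable_const (2 * x)))).add
    (integrable_const _)

lemma integral_sub_sq_betaPrimeMeasure {n : ℕ} (hn : 2 ≤ n) (j : ℕ) (x : ℝ) :
    ∫ t, (t - x) ^ 2 ∂betaPrimeMeasure n j =
      (j / n - x) ^ 2 + j * (j + n) / (n ^ 2 * (n - 1)) := by
  obtain ⟨n, rfl⟩ := Nat.exists_eq_add_of_le' hn
  have hlin := integrable_id_betaPrimeMeasure n (j + 1)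
  have hconst := integrable_const (μ := betaPrimeMeasure (n + 1) (j + 1)) (2 * x)
  simp only [sub_sq_eq_mul_add _ x]
  have hmul : Integrable (fun t => t * (t - 2 * x)) (betaPrimeMeasure (n + 2) j) :=
    integrable_id_mul_betaPrimeMeasure (hlin.sub hconst)
  rw [integral_add hmul (integrable_const _),
    integral_id_mul_betaPrimeMeasure, integral_sub hlin hconst, integral_id_betaPrimeMeasure]
  have hcast : ((n + 2 : ℕ) : ℝ) - 1 = n + 1 := by push_cast; ring
  simp only [hcast, integral_const, probReal_univ, one_smul]
  push_cast
  field_simp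
  ring

lemma sub_sq_add_le_integral_sub_sq {n : ℕ} (hn : 2 ≤ n) (j : ℕ) (x : ℝ) :
    (j - n * x) ^ 2 + j ≤ n ^ 2 * ∫ t, (t - x) ^ 2 ∂betaPrimeMeasure n j := by
  have hn2 : (2 : ℝ) ≤ n := by exact_mod_cast hn
  have hn1 : (0 : ℝ) < n - 1 := by linarith
  have hvar : (n : ℝ) ^ 2 * ∫ t, (t - x) ^ 2 ∂betaPrimeMeasure n j =
      (j - n * x) ^ 2 + j * (j + n) / (n - 1) := by
    rw [integral_sub_sq_betaPrimeMeasure hn]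
    field_simp
  have hj : (j : ℝ) ≤ j * (j + n) / (n - 1) := by
    rw [le_div_iff₀ hn1]
    gcongr
    linarith [(j.cast_nonneg : (0 : ℝ) ≤ j)]
  linarith

lemma integral_sub_sq_div_one_add_le {n : ℕ} (hn : 1 ≤ n) (j : ℕ) (x : ℝ) :
    ∫ t, (t - x) ^ 2 / (1 + t) ∂betaPrimeMeasure n j ≤ 2 / n ^ 2 * ((j - n * x) ^ 2 + j) := by
  have hn1 : (1 : ℝ) ≤ n := by exact_mod_cast hn
  have hj : (0 : ℝ) ≤ j := j.cast_nonneg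
  rw [integral_div_one_add_betaPrimeMeasure, integral_sub_sq_betaPrimeMeasure (by omega)]
  push_cast
  rw [add_sub_cancel_right]
  set d : ℝ := j - n * x with hd
  have hx : x = (j - d) / n := by rw [hd]; field_simp; ring
  have hsplit : ((n : ℝ) + 1) / (n + 1 + j) *
      ((j / (n + 1) - x) ^ 2 + j * (j + (n + 1)) / ((n + 1) ^ 2 * n)) =
      ((n + 1) * d - j) ^ 2 / (n ^ 2 * (n + 1) * (n + 1 + j)) + j / (n * (n + 1)) := by
    rw [hx]
    field_simp
    ring
  have hsq : ((n + 1) * d - j) ^ 2 / (n ^ 2 * (n + 1) * (n + 1 + j)) ≤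
      2 / n ^ 2 * d ^ 2 + 2 * j / (n ^ 2 * (n + 1)) := by
    rw [div_le_iff₀ (by positivity)]
    field_simp
    nlinarith [sq_nonneg ((n + 1) * d + j), mul_nonneg hj (sq_nonneg d)]
  have hlin : 2 * j / (n ^ 2 * (n + 1)) + j / (n * (n + 1)) ≤ 2 / (n : ℝ) ^ 2 * j := by
    field_simp
    nlinarith [mul_nonneg hj (sub_nonneg.2 hn1)]
  linarith

/-! ### The Ditzian–Totik modulus -/

section DitzianTotik

variable {f : ℝ → ℝ} {B γ δ ε a b t x : ℝ}

lemma dtMod_nonneg (f : ℝ → ℝ) (γ δ : ℝ) : 0 ≤ dtMod f γ δ := by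
  refine Real.sSup_nonneg ?_
  rintro _ ⟨_, _, _, _, _, rfl⟩
  exact abs_nonneg _

lemma chi_pos (hx : 0 < x) : 0 < chi x := by
  unfold chi; positivity

lemma sq_chi (hx : 0 ≤ x) : chi x ^ 2 = x * (1 + x) :=
  sq_sqrt (by positivity)

lemma chi_le_chi (ha : 0 ≤ a) (hab : a ≤ b) : chi a ≤ chi b := by
  unfold chi; gcongr; linarith

lemma chi_rpow_mul_chi_rpow (hx : 0 < x) (γ : ℝ) :
    chi x ^ (1 - γ) * chi x ^ γ = chi x := by
  rw [← rpow_add (chi_pos hx), sub_add_cancel, rpow_one]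

lemma bddAbove_dtMod (hB : ∀ t, 0 ≤ t → |f t| ≤ B) (γ δ : ℝ) :
    BddAbove {d : ℝ | ∃ h x : ℝ, 0 < h ∧ h ≤ δ ∧ 0 ≤ x - h * chi x ^ γ / 2 ∧
      d = |f (x + h * chi x ^ γ / 2) - f (x - h * chi x ^ γ / 2)|} := by
  refine ⟨B + B, ?_⟩
  rintro _ ⟨h, x, hh, -, hx, rfl⟩
  have hstep : 0 ≤ h * chi x ^ γ / 2 := by
    have hchi : 0 ≤ chi x := sqrt_nonneg _
    positivity
  exact (abs_sub _ _).trans (add_le_add (hB _ (by linarith)) (hB _ hx))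

lemma abs_sub_le_dtMod (hB : ∀ t, 0 ≤ t → |f t| ≤ B) (ha : 0 ≤ a)
    (hab : a ≤ b) (hstep : b - a ≤ δ * chi ((a + b) / 2) ^ γ) :
    |f b - f a| ≤ dtMod f γ δ := by
  rcases hab.eq_or_lt with rfl | hlt
  · simpa using dtMod_nonneg f γ δ
  have hchi : 0 < chi ((a + b) / 2) ^ γ := rpow_pos_of_pos (chi_pos (by linarith)) _
  refine le_csSup (bddAbove_dtMod hB γ δ) ⟨(b - a) / chi ((a + b) / 2) ^ γ, (a + b) / 2,
    div_pos (sub_pos.2 hlt) hchi, (div_le_iff₀ hchi).2 hstep, ?_⟩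
  rw [div_mul_cancel₀ _ hchi.ne', show (a + b) / 2 + (b - a) / 2 = b by ring,
    show (a + b) / 2 - (b - a) / 2 = a by ring]
  exact ⟨ha, rfl⟩

lemma abs_sub_le_dtMod_of_le_left (hB : ∀ t, 0 ≤ t → |f t| ≤ B) (hγ : 0 ≤ γ) (hε : 0 ≤ ε)
    (hx : 0 < x) (hxa : x ≤ a) (hab : a ≤ b) (hstep : b - a ≤ chi x * ε) :
    |f b - f a| ≤ dtMod f γ (chi x ^ (1 - γ) * ε) := by
  have hchi := chi_pos hx
  refine abs_sub_le_dtMod hB (hx.le.trans hxa) hab (hstep.trans ?_)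
  calc chi x * ε = chi x ^ (1 - γ) * ε * chi x ^ γ := by
        rw [mul_right_comm, chi_rpow_mul_chi_rpow hx]
    _ ≤ chi x ^ (1 - γ) * ε * chi ((a + b) / 2) ^ γ := by
        gcongr
        exact chi_le_chi hx.le (by linarith)

lemma abs_sub_le_dtMod_of_right_le (hB : ∀ t, 0 ≤ t → |f t| ≤ B) (hγ : γ ≤ 1) (hε : 0 ≤ ε)
    (ha : 0 ≤ a) (hab : a ≤ b) (hbx : b ≤ x) (hstep : b - a ≤ chi ((a + b) / 2) * ε) :
    |f b - f a| ≤ dtMod f γ (chi x ^ (1 - γ) * ε) := by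
  rcases hab.eq_or_lt with rfl | hlt
  · simpa using dtMod_nonneg f γ _
  have hmid : 0 < (a + b) / 2 := by linarith
  have hchi := chi_pos hmid
  refine abs_sub_le_dtMod hB ha hab (hstep.trans ?_)
  calc chi ((a + b) / 2) * ε
      = chi ((a + b) / 2) ^ (1 - γ) * ε * chi ((a + b) / 2) ^ γ := by
        rw [mul_right_comm, chi_rpow_mul_chi_rpow hmid]
    _ ≤ chi x ^ (1 - γ) * ε * chi ((a + b) / 2) ^ γ := by
        gcongr
        exact chi_le_chi hmid.le (by linarith)

/-! ### Chaining -/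

lemma abs_sub_le_natCast_mul {g : ℝ → ℝ} {w c : ℝ} (hw : 0 ≤ w) (hc : 0 ≤ c)
    (hstep : ∀ u v, a ≤ u → u ≤ v → v ≤ b → v - u ≤ c → |g v - g u| ≤ w) (k : ℕ) {y : ℝ}
    (hay : a ≤ y) (hyb : y ≤ b) (hyk : y - a ≤ k * c) : |g y - g a| ≤ k * w := by
  induction k generalizing y with
  | zero =>
    obtain rfl : y = a := by simp only [CharP.cast_eq_zero, zero_mul] at hyk; linarith
    simp
  | succ k ih =>
    push_cast at hyk ⊢
    rcases le_total (y - a) c with hnear | hfar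
    · linarith [hstep a y le_rfl hay hyb hnear, mul_nonneg k.cast_nonneg hw]
    · have hprev := ih (y := y - c) (by linarith) (by linarith) (by linarith)
      have hlast := hstep (y - c) y (by linarith) (by linarith) hyb (by linarith)
      linarith [abs_sub_le (g y) (g (y - c)) (g a)]

lemma abs_sub_le_one_add_div_mul {g : ℝ → ℝ} {w c : ℝ} (hw : 0 ≤ w) (hc : 0 < c)
    (hab : a ≤ b) (hstep : ∀ u v, a ≤ u → u ≤ v → v ≤ b → v - u ≤ c → |g v - g u| ≤ w) :
    |g b - g a| ≤ (1 + (b - a) / c) * w := by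
  have hceil := Nat.ceil_lt_add_one (div_nonneg (sub_nonneg.2 hab) hc.le)
  calc |g b - g a| ≤ ⌈(b - a) / c⌉₊ * w :=
        abs_sub_le_natCast_mul hw hc.le hstep _ hab le_rfl ((div_le_iff₀ hc).1 (Nat.le_ceil _))
    _ ≤ (1 + (b - a) / c) * w := by gcongr; linarith

lemma abs_sub_le_dtMod_of_ge (hB : ∀ t, 0 ≤ t → |f t| ≤ B)
    (hγ : 0 ≤ γ) (hε : 0 < ε) (hx : 0 < x) (hxt : x ≤ t) :
    |f t - f x| ≤
      (2 + (t - x) ^ 2 / (x * (1 + x) * ε ^ 2)) * dtMod f γ (chi x ^ (1 - γ) * ε) := by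
  have hw := dtMod_nonneg f γ (chi x ^ (1 - γ) * ε)
  have hchi := chi_pos hx
  refine (abs_sub_le_one_add_div_mul hw (mul_pos hchi hε) hxt
    fun u v hu huv _ huv' => abs_sub_le_dtMod_of_le_left hB hγ hε.le hx hu huv huv').trans ?_
  refine mul_le_mul_of_nonneg_right ?_ hw
  rw [← sq_chi hx.le, ← mul_pow, ← div_pow]
  nlinarith [sq_nonneg ((t - x) / (chi x * ε) - 1)]

lemma sq_sub_sq_le_chi_mul (ht : 0 ≤ t) (hta : √t ≤ a) (hab : a ≤ b)
    (hε : 0 ≤ ε) (hba : b - a ≤ √(1 + t) / 2 * ε) :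
    b ^ 2 - a ^ 2 ≤ chi ((a ^ 2 + b ^ 2) / 2) * ε := by
  have ha : 0 ≤ a := (sqrt_nonneg t).trans hta
  have hta' : t ≤ a ^ 2 := (sqrt_le_left ha).1 hta
  have hab' : a ^ 2 ≤ b ^ 2 := by gcongr
  have hchi : √(1 + t) / 2 * (a + b) ≤ chi ((a ^ 2 + b ^ 2) / 2) := by
    refine le_sqrt_of_sq_le ?_
    rw [mul_pow, div_pow, sq_sqrt (by linarith)]
    calc (1 + t) / 2 ^ 2 * (a + b) ^ 2 ≤ (1 + t) / 2 ^ 2 * (2 * (a ^ 2 + b ^ 2)) := by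
          gcongr; linarith [sq_nonneg (a - b)]
      _ = (a ^ 2 + b ^ 2) / 2 * (1 + t) := by ring
      _ ≤ (a ^ 2 + b ^ 2) / 2 * (1 + (a ^ 2 + b ^ 2) / 2) := by gcongr; linarith
  calc b ^ 2 - a ^ 2 = (b - a) * (a + b) := by ring
    _ ≤ √(1 + t) / 2 * ε * (a + b) := by gcongr; linarith
    _ = √(1 + t) / 2 * (a + b) * ε := by ring
    _ ≤ chi ((a ^ 2 + b ^ 2) / 2) * ε := by gcongr

lemma sq_sqrt_sub_sqrt_le (ht : 0 ≤ t) (hx : 0 < x) :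
    (√x - √t) ^ 2 ≤ (t - x) ^ 2 / x := by
  rw [le_div_iff₀ hx]
  calc (√x - √t) ^ 2 * x = (√x - √t) ^ 2 * √x ^ 2 := by rw [sq_sqrt hx.le]
    _ ≤ (√x - √t) ^ 2 * (√x + √t) ^ 2 := by
        gcongr; linarith [sqrt_nonneg t]
    _ = (√t ^ 2 - √x ^ 2) ^ 2 := by ring
    _ = (t - x) ^ 2 := by rw [sq_sqrt ht, sq_sqrt hx.le]

/- Near `0` the steps allowed for `f` shrink with `χ`; in the variable `s = √t` the Jacobian `2s`
absorbs the factor `√t` of `χ(t)`, so that one step length serves the whole chain. -/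
lemma abs_sub_le_dtMod_of_le (hB : ∀ t, 0 ≤ t → |f t| ≤ B)
    (hγ : γ ≤ 1) (hε : 0 < ε) (hx : 0 < x) (ht : 0 ≤ t) (htx : t ≤ x) :
    |f t - f x| ≤
      (2 + (t - x) ^ 2 / (x * (1 + t) * ε ^ 2)) * dtMod f γ (chi x ^ (1 - γ) * ε) := by
  set w := dtMod f γ (chi x ^ (1 - γ) * ε)
  have hw : 0 ≤ w := dtMod_nonneg ..
  set c := √(1 + t) / 2 * ε
  have hc : 0 < c := by positivity
  have hc_sq : c ^ 2 = (1 + t) * ε ^ 2 / 4 := by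
    rw [mul_pow, div_pow, sq_sqrt (by linarith)]; ring
  have hchain : |f (√x ^ 2) - f (√t ^ 2)| ≤ (1 + (√x - √t) / c) * w := by
    refine abs_sub_le_one_add_div_mul (g := fun s => f (s ^ 2)) hw hc (sqrt_le_sqrt htx)
      fun a b hta hab hbx hbac => ?_
    have ha : 0 ≤ a := (sqrt_nonneg t).trans hta
    have hbx' : b ^ 2 ≤ x := (le_sqrt (ha.trans hab) hx.le).1 hbx
    exact abs_sub_le_dtMod_of_right_le hB hγ hε.le (sq_nonneg a) (by gcongr) hbx'
      (sq_sub_sq_le_chi_mul ht hta hab hε.le hbac)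
  rw [sq_sqrt hx.le, sq_sqrt ht, abs_sub_comm] at hchain
  refine hchain.trans (mul_le_mul_of_nonneg_right ?_ hw)
  calc 1 + (√x - √t) / c ≤ 2 + (√x - √t) ^ 2 / (4 * c ^ 2) := by
        have hsq := sq_nonneg ((√x - √t) / c / 2 - 1)
        have hexp : (√x - √t) ^ 2 / (4 * c ^ 2) = ((√x - √t) / c) ^ 2 / 4 := by
          rw [div_pow, div_div, mul_comm 4]
        linarith
    _ ≤ 2 + (t - x) ^ 2 / x / (4 * c ^ 2) := by gcongr; exact sq_sqrt_sub_sqrt_le ht hx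
    _ = 2 + (t - x) ^ 2 / (x * (1 + t) * ε ^ 2) := by rw [hc_sq, div_div]; ring_nf

lemma abs_sub_le_mul_dtMod (hB : ∀ t, 0 ≤ t → |f t| ≤ B)
    (hγ0 : 0 ≤ γ) (hγ1 : γ ≤ 1) (hε : 0 < ε) (hx : 0 < x) (ht : 0 ≤ t) :
    |f t - f x| ≤ (2 + (t - x) ^ 2 / (x * (1 + x) * ε ^ 2) +
      (t - x) ^ 2 / (x * (1 + t) * ε ^ 2)) * dtMod f γ (chi x ^ (1 - γ) * ε) := by
  have hw := dtMod_nonneg f γ (chi x ^ (1 - γ) * ε)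
  have hup : 0 ≤ (t - x) ^ 2 / (x * (1 + x) * ε ^ 2) := by positivity
  have hdown : 0 ≤ (t - x) ^ 2 / (x * (1 + t) * ε ^ 2) := by positivity
  rcases le_total x t with hxt | htx
  · exact (abs_sub_le_dtMod_of_ge hB hγ0 hε hx hxt).trans
      (mul_le_mul_of_nonneg_right (by linarith) hw)
  · exact (abs_sub_le_dtMod_of_le hB hγ1 hε hx ht htx).trans
      (mul_le_mul_of_nonneg_right (by linarith) hw)

end DitzianTotik

/-! ### Averages of beta-prime laws -/

lemma abs_integral_betaPrimeMeasure_sub_le {f : ℝ → ℝ} {n j : ℕ} {x L a b c : ℝ} (hn : 2 ≤ n)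
    (hf : Integrable f (betaPrimeMeasure n j)) (hc : 0 ≤ c)
    (hbound : ∀ t, 0 ≤ t → |f t - L| ≤ a + b * (t - x) ^ 2 + c * ((t - x) ^ 2 / (1 + t))) :
    |∫ t, f t ∂betaPrimeMeasure n j - L| ≤ a + b * ∫ t, (t - x) ^ 2 ∂betaPrimeMeasure n j +
      c * (2 / n ^ 2 * ((j - n * x) ^ 2 + j)) := by
  have hconst := integrable_const (μ := betaPrimeMeasure n j) a
  have hsq := (integrable_sub_sq_betaPrimeMeasure hn j x).const_mul b
  have hlin : Integrable (fun t => a + b * (t - x) ^ 2) (betaPrimeMeasure n j) := hconst.add hsq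
  have hdiv := (integrable_div_one_add_betaPrimeMeasure
    (integrable_sub_sq_betaPrimeMeasure (n := n + 1) (by omega) j x)).const_mul c
  calc |∫ t, f t ∂betaPrimeMeasure n j - L|
      = ‖∫ t, (f t - L) ∂betaPrimeMeasure n j‖ := by
        rw [integral_sub hf (integrable_const _), integral_const, probReal_univ, one_smul,
          norm_eq_abs]
    _ ≤ ∫ t, (a + b * (t - x) ^ 2 + c * ((t - x) ^ 2 / (1 + t))) ∂betaPrimeMeasure n j :=
        norm_integral_le_of_norm_le (hlin.add hdiv)
          ((ae_nonneg_betaPrimeMeasure n j).mono hbound)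
    _ = a + b * ∫ t, (t - x) ^ 2 ∂betaPrimeMeasure n j +
          c * ∫ t, (t - x) ^ 2 / (1 + t) ∂betaPrimeMeasure n j := by
        rw [integral_add hlin hdiv, integral_add hconst hsq, integral_const_mul,
          integral_const_mul, integral_const, probReal_univ, one_smul]
    _ ≤ a + b * ∫ t, (t - x) ^ 2 ∂betaPrimeMeasure n j +
          c * (2 / n ^ 2 * ((j - n * x) ^ 2 + j)) := by
        gcongr
        exact integral_sub_sq_div_one_add_le (by omega) j x

lemma abs_integral_betaPrimeMeasure_sub_le_dtMod {f : ℝ → ℝ} {B γ x : ℝ} {n : ℕ}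
    (hf : ContinuousOn f (Set.Ici 0)) (hB : ∀ t, 0 ≤ t → |f t| ≤ B) (hγ0 : 0 ≤ γ) (hγ1 : γ ≤ 1)
    (hn : 2 ≤ n) (hx : 0 < x) (j : ℕ) :
    |∫ t, f t ∂betaPrimeMeasure n j - f x| ≤
      (2 + n / (x * (1 + x)) * ∫ t, (t - x) ^ 2 ∂betaPrimeMeasure n j +
        2 / (n * x) * ((j - n * x) ^ 2 + j)) * dtMod f γ (chi x ^ (1 - γ) / √n) := by
  set w := dtMod f γ (chi x ^ (1 - γ) / √n) with hw_def
  have hw : 0 ≤ w := dtMod_nonneg ..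
  have hn0 : (0 : ℝ) < n := by positivity
  have hpointwise : ∀ t, 0 ≤ t → |f t - f x| ≤
      2 * w + n / (x * (1 + x)) * w * (t - x) ^ 2 + n / x * w * ((t - x) ^ 2 / (1 + t)) := by
    intro t ht
    have hbound := abs_sub_le_mul_dtMod hB hγ0 hγ1 (inv_pos.2 (sqrt_pos.2 hn0)) hx ht
    rw [← div_eq_mul_inv, ← hw_def, inv_pow, sq_sqrt hn0.le] at hbound
    refine hbound.trans_eq ?_
    field_simp
  refine (abs_integral_betaPrimeMeasure_sub_le hn
    (integrable_betaPrimeMeasure_of_bounded hf hB n j) (by positivity) hpointwise).trans_eq ?_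
  field_simp

section BetaPrimeAverage

variable {θ : ℕ → ℝ} {s : ℝ} {n : ℕ}

lemma summable_mul_natCast_pow (hs : 1 < s)
    (hθ : Summable fun j => θ j * s ^ j) (k : ℕ) : Summable fun j => θ j * (j : ℝ) ^ k :=
  summable_of_isBigO_nat hθ
    ((Asymptotics.isBigO_refl θ atTop).mul (isLittleO_pow_const_const_pow_of_one_lt k hs).isBigO)

lemma summable_mul_quadratic (hs : 1 < s)
    (hθ : Summable fun j => θ j * s ^ j) (a b c : ℝ) :
    Summable fun j : ℕ => θ j * (a * j ^ 2 + b * j + c) := by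
  refine ((((summable_mul_natCast_pow hs hθ 2).mul_left a).add
    ((summable_mul_natCast_pow hs hθ 1).mul_left b)).add
    ((summable_mul_natCast_pow hs hθ 0).mul_left c)).congr fun j => ?_
  ring

lemma summable_mul_sub_sq_add (hs : 1 < s)
    (hθ : Summable fun j => θ j * s ^ j) (y : ℝ) :
    Summable fun j : ℕ => θ j * ((j - y) ^ 2 + j) :=
  (summable_mul_quadratic hs hθ 1 (1 - 2 * y) (y ^ 2)).congr fun j => by ring

lemma summable_mul_integral_sub_sq (hs : 1 < s)
    (hθ : Summable fun j => θ j * s ^ j) (hn : 2 ≤ n) (x : ℝ) :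
    Summable fun j => θ j * ∫ t, (t - x) ^ 2 ∂betaPrimeMeasure n j := by
  have hn2 : (2 : ℝ) ≤ n := by exact_mod_cast hn
  have hn1 : (n : ℝ) - 1 ≠ 0 := by linarith
  refine (summable_mul_quadratic hs hθ (1 / n ^ 2 + 1 / (n ^ 2 * (n - 1)))
    (1 / (n * (n - 1)) - 2 * x / n) (x ^ 2)).congr fun j => ?_
  rw [integral_sub_sq_betaPrimeMeasure hn]
  field_simp
  ring

/- Multiplied by `N²`, the second moment about `y / N` tends to `∑ θ j * ((j - y) ^ 2 + j)` from
above as `N → ∞`, while the assumed bound tends to `K * y`. -/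
lemma tsum_mul_sub_sq_add_le {K y : ℝ} (hθ0 : ∀ j, 0 ≤ θ j) (hs : 1 < s)
    (hθ : Summable fun j => θ j * s ^ j)
    (hmom : ∀ N : ℕ, 2 ≤ N → ∑' j, θ j * ∫ t, (t - y / N) ^ 2 ∂betaPrimeMeasure N j ≤
      K * (y / N) * (1 + y / N) / N) :
    ∑' j : ℕ, θ j * ((j - y) ^ 2 + j) ≤ K * y := by
  have hbound : ∀ N : ℕ, 2 ≤ N →
      ∑' j : ℕ, θ j * ((j - y) ^ 2 + j) ≤ K * y * (1 + y / N) := by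
    intro N hN
    have hN0 : (0 : ℝ) < N := by positivity
    calc ∑' j : ℕ, θ j * ((j - y) ^ 2 + j)
        ≤ ∑' j, N ^ 2 * (θ j * ∫ t, (t - y / N) ^ 2 ∂betaPrimeMeasure N j) := by
          refine Summable.tsum_le_tsum (fun j => ?_) (summable_mul_sub_sq_add hs hθ y)
            ((summable_mul_integral_sub_sq hs hθ hN _).mul_left _)
          have hj := sub_sq_add_le_integral_sub_sq hN j (y / N)
          rw [mul_div_cancel₀ y hN0.ne'] at hj
          rw [mul_left_comm]
          exact mul_le_mul_of_nonneg_left hj (hθ0 j)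
      _ ≤ N ^ 2 * (K * (y / N) * (1 + y / N) / N) := by
          rw [tsum_mul_left]
          gcongr
          exact hmom N hN
      _ = K * y * (1 + y / N) := by field_simp
  have hlim : Tendsto (fun N : ℕ => K * y * (1 + y / N)) atTop (𝓝 (K * y)) := by
    simpa using ((tendsto_const_div_atTop_nhds_zero_nat y).const_add 1).const_mul (K * y)
  exact ge_of_tendsto hlim ((eventually_ge_atTop 2).mono hbound)

lemma summable_mul_of_abs_sub_le {c e : ℕ → ℝ} {L : ℝ} (hθ0 : ∀ j, 0 ≤ θ j)
    (hθ : Summable θ) (he : Summable fun j => θ j * e j) (hce : ∀ j, |c j - L| ≤ e j) :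
    Summable fun j => θ j * c j := by
  have hsub : Summable fun j => θ j * (c j - L) :=
    he.of_norm_bounded fun j => by
      rw [norm_mul, norm_of_nonneg (hθ0 j)]
      exact mul_le_mul_of_nonneg_left (hce j) (hθ0 j)
  exact (hsub.add (hθ.mul_right L)).congr fun j => by ring

lemma abs_inv_mul_tsum_sub_le {c e : ℕ → ℝ} {L Z : ℝ} (hθ0 : ∀ j, 0 ≤ θ j) (hZ : HasSum θ Z)
    (hZ0 : 0 < Z) (he : Summable fun j => θ j * e j) (hce : ∀ j, |c j - L| ≤ e j) :
    |Z⁻¹ * ∑' j, θ j * c j - L| ≤ Z⁻¹ * ∑' j, θ j * e j := by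
  have hc := summable_mul_of_abs_sub_le hθ0 hZ.summable he hce
  have hcentred : Z⁻¹ * ∑' j, θ j * c j - L = Z⁻¹ * ∑' j, θ j * (c j - L) := by
    simp only [mul_sub]
    rw [hc.tsum_sub (hZ.summable.mul_right L), tsum_mul_right, hZ.tsum_eq]
    field_simp
  rw [hcentred, abs_mul, abs_of_pos (inv_pos.2 hZ0)]
  gcongr
  refine tsum_of_norm_bounded (f := fun j => θ j * (c j - L)) he.hasSum fun j => ?_
  rw [norm_mul, norm_of_nonneg (hθ0 j)]
  exact mul_le_mul_of_nonneg_left (hce j) (hθ0 j)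

lemma summable_mul_integral_betaPrimeMeasure {f : ℝ → ℝ} {B : ℝ}
    (hθ0 : ∀ j, 0 ≤ θ j) (hθ : Summable θ) (hB : ∀ t, 0 ≤ t → |f t| ≤ B) :
    Summable fun j => θ j * ∫ t, f t ∂betaPrimeMeasure n j := by
  refine summable_mul_of_abs_sub_le (L := 0) hθ0 hθ (hθ.mul_right B) fun j => ?_
  rw [sub_zero]
  simpa using norm_integral_le_of_norm_le_const (f := f) ((ae_nonneg_betaPrimeMeasure n j).mono hB)

lemma abs_inv_mul_tsum_integral_sub_le_dtMod {Z M B γ x : ℝ} {f : ℝ → ℝ}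
    (hθ0 : ∀ j, 0 ≤ θ j) (hs : 1 < s) (hθ : Summable fun j => θ j * s ^ j) (hZ : HasSum θ Z)
    (hZ0 : 0 < Z) (hf : ContinuousOn f (Set.Ici 0)) (hB : ∀ t, 0 ≤ t → |f t| ≤ B)
    (hγ0 : 0 ≤ γ) (hγ1 : γ ≤ 1) (hn : 2 ≤ n) (hx : 0 < x)
    (hvar : ∑' j, θ j * ∫ t, (t - x) ^ 2 ∂betaPrimeMeasure n j ≤ Z * (M * x * (1 + x) / n))
    (hdisc : ∑' j : ℕ, θ j * ((j - n * x) ^ 2 + j) ≤ Z * M * (n * x)) :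
    |Z⁻¹ * ∑' j, θ j * ∫ t, f t ∂betaPrimeMeasure n j - f x| ≤
      (2 + 3 * M) * dtMod f γ (chi x ^ (1 - γ) / √n) := by
  set w := dtMod f γ (chi x ^ (1 - γ) / √n)
  have hw : 0 ≤ w := dtMod_nonneg ..
  have hsum : HasSum
      (fun j : ℕ => θ j * ((2 + n / (x * (1 + x)) * ∫ t, (t - x) ^ 2 ∂betaPrimeMeasure n j +
        2 / (n * x) * ((j - n * x) ^ 2 + j)) * w))
      ((2 * Z + n / (x * (1 + x)) * ∑' j, θ j * ∫ t, (t - x) ^ 2 ∂betaPrimeMeasure n j +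
        2 / (n * x) * ∑' j : ℕ, θ j * ((j - n * x) ^ 2 + j)) * w) := by
    refine ((((hZ.mul_left 2).add
      ((summable_mul_integral_sub_sq hs hθ hn x).hasSum.mul_left (n / (x * (1 + x))))).add
      ((summable_mul_sub_sq_add hs hθ (n * x)).hasSum.mul_left (2 / (n * x)))).mul_right
      w).congr_fun fun j => ?_
    ring
  refine (abs_inv_mul_tsum_sub_le hθ0 hZ hZ0 hsum.summable
    (abs_integral_betaPrimeMeasure_sub_le_dtMod hf hB hγ0 hγ1 hn hx)).trans ?_
  rw [hsum.tsum_eq]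
  calc Z⁻¹ * ((2 * Z + n / (x * (1 + x)) * ∑' j, θ j * ∫ t, (t - x) ^ 2 ∂betaPrimeMeasure n j +
        2 / (n * x) * ∑' j : ℕ, θ j * ((j - n * x) ^ 2 + j)) * w)
      ≤ Z⁻¹ * ((2 * Z + n / (x * (1 + x)) * (Z * (M * x * (1 + x) / n)) +
        2 / (n * x) * (Z * M * (n * x))) * w) := by gcongr
    _ = (2 + 3 * M) * w := by field_simp; ring

end BetaPrimeAverage

/-! ### The operator -/

lemma pnx_eq_of_mul_eq {T U V : ℝ → ℝ} {n : ℕ} {x y : ℝ} (hy : n * x = y) :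
    pnx T U V n x = y ^ 2 * T 1 + y * U 1 + V 1 := by
  rw [pnx, ← hy, mul_pow]

lemma BDop_eq_inv_mul_tsum {ξ S T U V : ℝ → ℝ} {Θ : ℕ → ℝ → ℝ} {n : ℕ} {f : ℝ → ℝ} {x : ℝ}
    (hsum : Summable fun j => Θ j (n * x) * ∫ t, f t ∂betaPrimeMeasure n j) :
    BDop ξ S T U V Θ n f x =
      (S 1 * ξ (pnx T U V n x))⁻¹ * ∑' j, Θ j (n * x) * ∫ t, f t ∂betaPrimeMeasure n j := by
  have hterm (j : ℕ) : Θ (j + 1) (n * x) * ∫ t, f t ∂betaPrimeMeasure n (j + 1) =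
      Θ (j + 1) (n * x) / betaB (j + 1) n *
        ∫ s in Set.Ioi 0, s ^ j * (1 + s) ^ (-((n : ℝ) + j + 2)) * f s := by
    rw [integral_betaPrimeMeasure_succ, mul_div_left_comm, mul_comm]
    congr 1
    exact setIntegral_congr_fun measurableSet_Ioi fun s (hs : 0 < s) => by
      rw [betaPrimeKernel_eq_rpow j n hs.le]
  rw [BDop, hsum.tsum_eq_zero_add, integral_betaPrimeMeasure_zero]
  simp only [hterm]

theorem stmt15_general {ρ : ℝ} (hρ : 1 < ρ) {ξ S T U V : ℝ → ℝ} {Θ : ℕ → ℝ → ℝ}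
    (hS1 : 0 < S 1)
    (hΘnn : ∀ (j : ℕ) (y : ℝ), 0 ≤ y → 0 ≤ Θ j y)
    (hgen : ∀ y : ℝ, 0 ≤ y → ∀ s ∈ Set.Ioo (-ρ) ρ,
      HasSum (fun j : ℕ => Θ j y * s ^ j) (S s * ξ (y ^ 2 * T s + y * U s + V s)))
    (hξp : ∀ m : ℕ, 1 ≤ m → ∀ y : ℝ, 0 ≤ y → 0 < ξ (pnx T U V m y))
    {γ : ℝ} (hγ0 : 0 ≤ γ) (hγ1 : γ ≤ 1) {M : ℝ}
    (hmom : ∀ n : ℕ, 2 ≤ n → ∀ x : ℝ, 0 ≤ x →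
      BDop ξ S T U V Θ n (fun t => (t - x) ^ 2) x ≤ M * x * (1 + x) / n)
    (f : ℝ → ℝ) (hf : ContinuousOn f (Set.Ici 0)) (hbdd : ∃ B : ℝ, ∀ y : ℝ, 0 ≤ y → |f y| ≤ B)
    (n : ℕ) (hn : 2 ≤ n) (x : ℝ) (hx : 0 < x) :
    |BDop ξ S T U V Θ n f x - f x| ≤ (2 + 3 * M) * dtMod f γ (chi x ^ (1 - γ) / √n) := by
  obtain ⟨B, hB⟩ := hbdd
  obtain ⟨s, hs1, hsρ⟩ := exists_between hρ
  set y := n * x with hy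
  have hy0 : 0 ≤ y := by positivity
  have hθ : Summable fun j => Θ j y * s ^ j := (hgen y hy0 s ⟨by linarith, hsρ⟩).summable
  set Z := S 1 * ξ (y ^ 2 * T 1 + y * U 1 + V 1)
  have hZ : HasSum (fun j => Θ j y) Z := by
    simpa only [one_pow, mul_one] using hgen y hy0 1 ⟨by linarith, hρ⟩
  have hZ0 : 0 < Z := mul_pos hS1 (pnx_eq_of_mul_eq hy.symm ▸ hξp n (by omega) x hx.le)
  have hvar : ∀ N : ℕ, 2 ≤ N → ∀ z, 0 ≤ z → N * z = y →
      ∑' j, Θ j y * ∫ t, (t - z) ^ 2 ∂betaPrimeMeasure N j ≤ Z * (M * z * (1 + z) / N) := by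
    intro N hN z hz hNz
    have hNmom := hmom N hN z hz
    rwa [BDop_eq_inv_mul_tsum (hNz ▸ summable_mul_integral_sub_sq hs1 hθ hN z),
      pnx_eq_of_mul_eq hNz, hNz, inv_mul_le_iff₀ hZ0] at hNmom
  have hdisc : ∑' j : ℕ, Θ j y * ((j - y) ^ 2 + j) ≤ Z * M * y := by
    refine tsum_mul_sub_sq_add_le (hΘnn · y hy0) hs1 hθ fun N hN => ?_
    refine (hvar N hN (y / N) (by positivity) (mul_div_cancel₀ y (by positivity))).trans_eq ?_
    ring
  rw [BDop_eq_inv_mul_tsum (summable_mul_integral_betaPrimeMeasure (hΘnn · y hy0) hZ.summable hB),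
    pnx_eq_of_mul_eq hy.symm]
  exact abs_inv_mul_tsum_integral_sub_le_dtMod (hΘnn · y hy0) hs1 hθ hZ hZ0 hf hB hγ0 hγ1 hn hx
    (hvar n hn x hx.le rfl) hdisc

theorem stmt15
    (ρ : ℝ) (hρ : 1 < ρ)
    (ξ S T U V : ℝ → ℝ) (Θ : ℕ → ℝ → ℝ)
    (p q r u v : ℕ → ℝ)
    (hξser : ∀ t : ℝ, HasSum (fun j : ℕ => p j * t ^ j) (ξ t))
    (hξnn : ∀ t : ℝ, 0 ≤ ξ t)
    (hSser : ∀ s ∈ Set.Ioo (-ρ) ρ, HasSum (fun j : ℕ => q j * s ^ j) (S s))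
    (hTser : ∀ s ∈ Set.Ioo (-ρ) ρ, HasSum (fun j : ℕ => r j * s ^ (j + 1)) (T s))
    (hUser : ∀ s ∈ Set.Ioo (-ρ) ρ, HasSum (fun j : ℕ => u j * s ^ (j + 2)) (U s))
    (hVser : ∀ s ∈ Set.Ioo (-ρ) ρ, HasSum (fun j : ℕ => v j * s ^ (j + 3)) (V s))
    (hS1 : 0 < S 1)
    (hT'1 : deriv T 1 = 0) (hT''1 : deriv (deriv T) 1 = 0) (hU'1 : deriv U 1 = 1)
    (hΘnn : ∀ (j : ℕ) (y : ℝ), 0 ≤ y → 0 ≤ Θ j y)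
    (hgen : ∀ y : ℝ, 0 ≤ y → ∀ s ∈ Set.Ioo (-ρ) ρ,
      HasSum (fun j : ℕ => Θ j y * s ^ j) (S s * ξ (y ^ 2 * T s + y * U s + V s)))
    (hξp : ∀ (m : ℕ), 1 ≤ m → ∀ y : ℝ, 0 ≤ y → 0 < ξ (pnx T U V m y))
    (γ : ℝ) (hγ0 : 0 ≤ γ) (hγ1 : γ ≤ 1)
    (M : ℝ) (hM : 0 < M)
    (hmom : ∀ (n : ℕ), 2 ≤ n → ∀ x : ℝ, 0 ≤ x →
      BDop ξ S T U V Θ n (fun t => (t - x) ^ 2) x ≤ M * x * (1 + x) / (n : ℝ)) :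
    ∃ D : ℝ, 0 < D ∧ ∃ n₀ : ℕ, ∀ f : ℝ → ℝ, ContinuousOn f (Set.Ici 0) →
      (∃ Mf : ℝ, ∀ y : ℝ, 0 ≤ y → |f y| ≤ Mf) →
      ∀ (n : ℕ), n₀ ≤ n → ∀ x : ℝ, 0 < x →
        |BDop ξ S T U V Θ n f x - f x| ≤
          D * dtMod f γ (chi x ^ (1 - γ) / Real.sqrt (n : ℝ)) :=
  ⟨2 + 3 * M, by positivity, 2, stmt15_general hρ hS1 hΘnn hgen hξp hγ0 hγ1 hmom⟩
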